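/- For every p ∈ (0, 1/2] and every ε > 0 there exist a constant c > 0, an exponent k ∈ ℕ, and N ∈ ℕ such that for every n ≥ N the following holds: for every probabilistic (n, Rn)-code with rate R = max(1 − 4p, 0) + ε there exists a causal adversary with power p against which the probability of error of the code is at least c · n^{−k}. (Quantitative form of Theorem 2: the adversary forces decoding error at least 1/poly(n) for probabilistic codes above rate (1−4p)^+.) -/

import Mathlib

open Finset

/-- The prefix `(x_1, …, x_{i+1})` (0-indexed: `x_0, …, x_i`) of a word `x : Fin n → Bool`. -/
def wordPrefix {n : ℕ} (x : Fin n → Bool) (i : Fin n) : Fin (i.1 + 1) → Bool :=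
  fun k => x ⟨k.1, lt_of_le_of_lt (Nat.lt_succ_iff.mp k.isLt) i.isLt⟩

/-- A causal adversary with power `p` on block length `n`: a (finite) jamming random
variable `J` with distribution `μ`, and for each position `i` a jamming function `g i`
depending only on the prefix `(x_1, …, x_i)` of the transmitted word and on `J`, flipping
at most `p * n` bits in total. -/
structure CausalAdversary (n : ℕ) (p : ℝ) where
  J : Type
  [instJ : Fintype J]
  μ : J → ℝ
  μ_nonneg : ∀ j, 0 ≤ μ j
  μ_sum : ∑ j, μ j = 1
  g : (i : Fin n) → (Fin (i.1 + 1) → Bool) → J → Bool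
  power : ∀ (x : Fin n → Bool) (j : J),
    (((univ : Finset (Fin n)).filter (fun i => g i (wordPrefix x i) j = true)).card : ℝ) ≤ p * n

attribute [instance] CausalAdversary.instJ

/-- The word received by Bob when Alice transmits `x` and the adversary's randomness is `j`:
`y_i = x_i XOR g_i((x_1,…,x_i), j)`. -/
def CausalAdversary.received {n : ℕ} {p : ℝ} (A : CausalAdversary n p)
    (x : Fin n → Bool) (j : A.J) : Fin n → Bool :=
  fun i => xor (x i) (A.g i (wordPrefix x i) j)


/-- The Shannon entropy (base 2) of a finitely supported probability distribution.
(Since `Real.logb 2 0 = 0`, terms with `q a = 0` contribute `0`, so this agrees with the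
sum over the support.) -/
noncomputable def entropy2 {α : Type*} [Fintype α] (q : α → ℝ) : ℝ :=
  ∑ a, -(q a * Real.logb 2 (q a))

/-- A probabilistic `(n, R n)`-code: a message random variable `U` over a finite alphabet
of size at most `2^n` with entropy `R n`, a randomized encoder drawing, for each message
`u`, a codeword in `{0,1}^n` from the distribution `encDist u`, and a possibly randomized
decoder. -/
structure ProbCode (n : ℕ) (R : ℝ) where
  U : Type
  [instU : Fintype U]
  card_le : Fintype.card U ≤ 2 ^ n
  pU : U → ℝ
  pU_nonneg : ∀ u, 0 ≤ pU u
  pU_sum : ∑ u, pU u = 1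
  pU_entropy : entropy2 pU = R * n
  encDist : U → (Fin n → Bool) → ℝ
  encDist_nonneg : ∀ u x, 0 ≤ encDist u x
  encDist_sum : ∀ u, ∑ x, encDist u x = 1
  dec : (Fin n → Bool) → U → ℝ
  dec_nonneg : ∀ y u, 0 ≤ dec y u
  dec_sum : ∀ y, ∑ u, dec y u = 1

attribute [instance] ProbCode.instU

/-- The probability of error of a probabilistic code against a causal adversary: the
probability, over the message `U`, the encoder's randomness, the adversary's randomness,
and the decoder's randomness, that the decoded message differs from the transmitted one. -/
noncomputable def ProbCode.errProb {n : ℕ} {R p : ℝ} (C : ProbCode n R)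
    (A : CausalAdversary n p) : ℝ :=
  ∑ u, ∑ x, ∑ j, C.pU u * C.encDist u x * A.μ j * (1 - C.dec (A.received x j) u)


/-- The first `ℓ` symbols of `x`, padded by `false` if `x` is shorter than that. -/
def headWord {n : ℕ} (ℓ : ℕ) (x : Fin n → Bool) : Fin ℓ → Bool :=
  fun k => if h : k.1 < n then x ⟨k.1, h⟩ else false

/-- The positions from `ℓ` on at which `x` and `y` differ. -/
def diffSet {n : ℕ} (ℓ : ℕ) (x y : Fin n → Bool) : Finset (Fin n) :=
  univ.filter fun i => ℓ ≤ i.1 ∧ x i ≠ y i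

/-- The number of positions in `diffSet ℓ x y` that lie strictly before `i`. -/
def diffRank {n : ℕ} (ℓ : ℕ) (x y : Fin n → Bool) (i : Fin n) : ℕ :=
  ((diffSet ℓ x y).filter fun k => k < i).card

/-- The `b`-th of two consecutive blocks of `t` natural numbers. -/
def rankBlock (t : ℕ) (b : Bool) : Finset ℕ :=
  if b then Ico t (2 * t) else range t

/-- The positions of `x` pushed towards `y`: those differing positions from `ℓ` on whose rank
lies in the block of `b`. -/
def pushSet {n : ℕ} (ℓ t : ℕ) (x y : Fin n → Bool) (b : Bool) : Finset (Fin n) :=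
  (diffSet ℓ x y).filter fun i => diffRank ℓ x y i ∈ rankBlock t b

/-- The word obtained from `x` by flipping the positions in `pushSet`. -/
def pushWord {n : ℕ} (ℓ t : ℕ) (x y : Fin n → Bool) (b : Bool) : Fin n → Bool :=
  fun i => xor (x i) (decide (i ∈ pushSet ℓ t x y b))

/-- The word extending a prefix by `false`. -/
def extendPrefix {n : ℕ} (i : Fin n) (w : Fin (i.1 + 1) → Bool) : Fin n → Bool :=
  fun k => if h : k.1 < i.1 + 1 then w ⟨k.1, h⟩ else false

lemma extendPrefix_wordPrefix {n : ℕ} (x : Fin n → Bool) {i k : Fin n} (h : k ≤ i) :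
    extendPrefix i (wordPrefix x i) k = x k := by
  have : k.1 < i.1 + 1 := Nat.lt_succ_of_le h
  simp [extendPrefix, wordPrefix, this]

lemma diffSet_comm {n : ℕ} (ℓ : ℕ) (x x' : Fin n → Bool) : diffSet ℓ x x' = diffSet ℓ x' x := by
  simp only [diffSet, ne_comm]

lemma diffRank_comm {n : ℕ} (ℓ : ℕ) (x x' : Fin n → Bool) (i : Fin n) :
    diffRank ℓ x x' i = diffRank ℓ x' x i := by
  simp only [diffRank, diffSet_comm ℓ x x']

lemma diffRank_lt {n : ℕ} {ℓ : ℕ} {x x' : Fin n → Bool} {i j : Fin n}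
    (hi : i ∈ diffSet ℓ x x') (hij : i < j) : diffRank ℓ x x' i < diffRank ℓ x x' j := by
  apply Finset.card_lt_card
  rw [Finset.ssubset_iff_of_subset]
  · exact ⟨i, by simp [hi, hij], by simp⟩
  · intro k hk
    simp only [mem_filter] at hk ⊢
    exact ⟨hk.1, hk.2.trans hij⟩

lemma diffRank_lt_card {n : ℕ} {ℓ : ℕ} {x x' : Fin n → Bool} {i : Fin n}
    (hi : i ∈ diffSet ℓ x x') : diffRank ℓ x x' i < (diffSet ℓ x x').card := by
  apply Finset.card_lt_card
  rw [Finset.ssubset_iff_of_subset (filter_subset _ _)]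
  exact ⟨i, hi, by simp⟩

lemma card_pushSet_le {n : ℕ} (ℓ t : ℕ) (x x' : Fin n → Bool) (b : Bool) :
    (pushSet ℓ t x x' b).card ≤ t := by
  have hcard : (rankBlock t b).card = t := by
    cases b <;> simp [rankBlock]
    omega
  refine (Finset.card_le_card_of_injOn (diffRank ℓ x x') ?_ ?_).trans_eq hcard
  · intro i hi
    exact (mem_filter.mp hi).2
  · intro i hi j hj hij
    have hi' := (mem_filter.mp hi).1
    have hj' := (mem_filter.mp hj).1
    rcases lt_trichotomy i j with h | h | h
    · exact absurd hij (diffRank_lt hi' h).ne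
    · exact h
    · exact absurd hij (diffRank_lt hj' h).ne'

lemma pushWord_swap {n : ℕ} {ℓ t : ℕ} {x x' : Fin n → Bool} (b : Bool)
    (hpre : headWord ℓ x = headWord ℓ x') (hd : (diffSet ℓ x x').card ≤ 2 * t) :
    pushWord ℓ t x x' b = pushWord ℓ t x' x (!b) := by
  funext i
  by_cases hi : i ∈ diffSet ℓ x x'
  · have hlt := diffRank_lt_card hi
    have hne : x i ≠ x' i := (mem_filter.mp hi).2.2
    have hmem : i ∈ pushSet ℓ t x' x (!b) ↔ ¬ i ∈ pushSet ℓ t x x' b := by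
      simp only [pushSet, mem_filter, ← diffSet_comm ℓ x x', ← diffRank_comm ℓ x x', hi, true_and]
      cases b <;> simp [rankBlock] <;> omega
    simp only [pushWord, hmem]
    revert hne
    by_cases h : i ∈ pushSet ℓ t x x' b <;> cases x i <;> cases x' i <;> simp [h]
  · have h1 : i ∉ pushSet ℓ t x x' b := fun h => hi (mem_filter.mp h).1
    have h2 : i ∉ pushSet ℓ t x' x (!b) := fun h => hi (by
      rw [diffSet_comm]; exact (mem_filter.mp h).1)
    have hx : x i = x' i := by
      by_cases hl : ℓ ≤ i.1
      · by_contra hne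
        exact hi (by simp [diffSet, hl, hne])
      · simpa [headWord] using congrFun hpre ⟨i.1, not_le.mp hl⟩
    simp [pushWord, h1, h2, hx]

lemma mem_pushSet_congr {n : ℕ} {ℓ t : ℕ} {x y x' : Fin n → Bool} {b : Bool} {i : Fin n}
    (h : ∀ k ≤ i, x k = y k) : i ∈ pushSet ℓ t x x' b ↔ i ∈ pushSet ℓ t y x' b := by
  have hr : diffRank ℓ x x' i = diffRank ℓ y x' i := by
    simp only [diffRank, diffSet, filter_filter]
    congr 1
    apply filter_congr
    intro k _
    constructor
    · rintro ⟨⟨h1, h2⟩, h3⟩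
      exact ⟨⟨h1, by rwa [← h k h3.le]⟩, h3⟩
    · rintro ⟨⟨h1, h2⟩, h3⟩
      exact ⟨⟨h1, by rwa [h k h3.le]⟩, h3⟩
  simp only [pushSet, mem_filter, hr, diffSet, h i le_rfl]

lemma mem_pushSet_extendPrefix {n : ℕ} (ℓ t : ℕ) (f : (Fin ℓ → Bool) → Fin n → Bool)
    (x : Fin n → Bool) (b : Bool) (i : Fin n) :
    i ∈ pushSet ℓ t (extendPrefix i (wordPrefix x i))
        (f (headWord ℓ (extendPrefix i (wordPrefix x i)))) b ↔
      i ∈ pushSet ℓ t x (f (headWord ℓ x)) b := by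
  by_cases hl : ℓ ≤ i.1
  · have htr : headWord ℓ (extendPrefix i (wordPrefix x i)) = headWord ℓ x := by
      funext k
      by_cases hk : k.1 < n
      · simp only [headWord, hk, dif_pos]
        exact extendPrefix_wordPrefix x (Fin.le_def.mpr (k.2.le.trans hl))
      · simp [headWord, hk]
    rw [htr]
    exact mem_pushSet_congr fun k hk => extendPrefix_wordPrefix x hk
  · simp [pushSet, diffSet, hl]

/-- The adversary that waits for `ℓ` symbols, picks the target word `f z` determined by the
observed prefix `z`, and pushes one of two blocks of differing positions towards the target. -/
noncomputable def pushAdversary (n : ℕ) (p : ℝ) (ℓ t : ℕ) (ht : (t : ℝ) ≤ p * n)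
    (f : (Fin ℓ → Bool) → Fin n → Bool) : CausalAdversary n p where
  J := Bool
  μ := fun _ => 1 / 2
  μ_nonneg := fun _ => by norm_num
  μ_sum := by simp
  g := fun i w b => decide (i ∈ pushSet ℓ t (extendPrefix i w)
    (f (headWord ℓ (extendPrefix i w))) b)
  power := by
    intro x b
    refine le_trans ?_ ht
    simp only [decide_eq_true_eq, mem_pushSet_extendPrefix]
    simpa using card_pushSet_le ℓ t x (f (headWord ℓ x)) b

lemma received_pushAdversary {n : ℕ} {p : ℝ} {ℓ t : ℕ} (ht : (t : ℝ) ≤ p * n)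
    (f : (Fin ℓ → Bool) → Fin n → Bool) (x : Fin n → Bool) (b : Bool) :
    (pushAdversary n p ℓ t ht f).received x b = pushWord ℓ t x (f (headWord ℓ x)) b := by
  funext i
  simp only [CausalAdversary.received, pushWord, pushAdversary, mem_pushSet_extendPrefix]

/-- Entropy bound from a list `A` of at most `2 ^ a` symbols carrying part of the mass. -/
lemma entropy2_le_of_card_le {α : Type*} [Fintype α] [DecidableEq α] (q : α → ℝ)
    (hq : ∀ a, 0 ≤ q a) (hsum : ∑ a, q a = 1) {n a : ℕ} (hcard : Fintype.card α ≤ 2 ^ n)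
    (A : Finset α) (hA : A.card ≤ 2 ^ a) :
    entropy2 q ≤ 1 + (∑ u ∈ A, q u) * a + (∑ u ∈ Aᶜ, q u) * n := by
  set e : α → ℕ := fun u => if u ∈ A then a else n with he
  have hlog2 : 0 < Real.log 2 := Real.log_pos one_lt_two
  have hterm : ∀ u, -(q u * Real.logb 2 (q u)) ≤
      q u * (1 + e u) + ((2 : ℝ)⁻¹ * (2 ^ e u)⁻¹ - q u) / Real.log 2 := by
    intro u
    set r : ℝ := (2 : ℝ)⁻¹ * (2 ^ e u)⁻¹ with hr
    have hr0 : 0 < r := by positivity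
    have hlr : Real.log r = -(1 + e u) * Real.log 2 := by
      rw [hr, Real.log_mul (by positivity) (by positivity), Real.log_inv, Real.log_inv,
        Real.log_pow]
      ring
    rcases (hq u).eq_or_lt with h0 | h0
    · rw [← h0]
      simp only [zero_mul, neg_zero, zero_add, sub_zero]
      positivity
    · have h1 := Real.log_le_sub_one_of_pos (div_pos hr0 h0)
      rw [Real.log_div hr0.ne' h0.ne', hlr] at h1
      have h2 : q u * (-(1 + e u) * Real.log 2 - Real.log (q u)) ≤ r - q u := by
        calc _ ≤ q u * (r / q u - 1) := mul_le_mul_of_nonneg_left h1 h0.le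
          _ = r - q u := by field_simp
      rw [Real.logb, ← sub_nonneg]
      have : q u * (1 + e u) + (r - q u) / Real.log 2 - -(q u * (Real.log (q u) / Real.log 2)) =
          ((r - q u) - q u * (-(1 + e u) * Real.log 2 - Real.log (q u))) / Real.log 2 := by
        field_simp
        ring
      rw [this]
      exact div_nonneg (by linarith) hlog2.le
  have hr_sum : ∑ u, (2 : ℝ)⁻¹ * (2 ^ e u)⁻¹ ≤ 1 := by
    rw [← Finset.sum_add_sum_compl A]
    have h1 : ∑ u ∈ A, (2 : ℝ)⁻¹ * (2 ^ e u)⁻¹ ≤ 2⁻¹ := by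
      rw [Finset.sum_congr rfl (g := fun _ => (2 : ℝ)⁻¹ * (2 ^ a)⁻¹)
        (fun u hu => by simp [he, hu]), sum_const, nsmul_eq_mul]
      have : (A.card : ℝ) ≤ 2 ^ a := by exact_mod_cast hA
      have h3 : (A.card : ℝ) * (2 ^ a)⁻¹ ≤ 1 := by
        rw [← div_eq_mul_inv, div_le_one (by positivity)]
        exact this
      linarith
    have h2 : ∑ u ∈ Aᶜ, (2 : ℝ)⁻¹ * (2 ^ e u)⁻¹ ≤ 2⁻¹ := by
      rw [Finset.sum_congr rfl (g := fun _ => (2 : ℝ)⁻¹ * (2 ^ n)⁻¹)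
        (fun u hu => by simp [he, mem_compl.mp hu]), sum_const, nsmul_eq_mul]
      have : ((Aᶜ).card : ℝ) ≤ 2 ^ n := by exact_mod_cast (card_le_univ _).trans hcard
      have h3 : ((Aᶜ).card : ℝ) * (2 ^ n)⁻¹ ≤ 1 := by
        rw [← div_eq_mul_inv, div_le_one (by positivity)]
        exact this
      linarith
    linarith
  have hE : ∑ u, q u * (1 + (e u : ℝ)) = 1 + (∑ u ∈ A, q u) * a + (∑ u ∈ Aᶜ, q u) * n := by
    simp only [mul_add, mul_one, sum_add_distrib, hsum, add_assoc, sum_mul]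
    rw [← Finset.sum_add_sum_compl A fun u => q u * (e u : ℝ)]
    congr 2
    · exact sum_congr rfl fun u hu => by simp [he, hu]
    · exact sum_congr rfl fun u hu => by simp [he, mem_compl.mp hu]
  calc entropy2 q ≤ ∑ u, (q u * (1 + e u) + ((2 : ℝ)⁻¹ * (2 ^ e u)⁻¹ - q u) / Real.log 2) :=
        sum_le_sum fun u _ => hterm u
    _ = ∑ u, q u * (1 + (e u : ℝ)) + (∑ u, (2 : ℝ)⁻¹ * (2 ^ e u)⁻¹ - 1) / Real.log 2 := by
        rw [sum_add_distrib, ← sum_div, sum_sub_distrib, hsum]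
    _ ≤ _ := by
        rw [hE]
        have := div_nonpos_of_nonpos_of_nonneg (sub_nonpos.mpr hr_sum) hlog2.le
        linarith

/-- Plotkin-type averaging bound: two independent samples differ on average in at most half of
the positions from `ℓ` on. -/
lemma sum_mul_card_diffSet_le {Ω : Type*} [Fintype Ω] {n : ℕ} (ℓ : ℕ) (ν : Ω → ℝ)
    (X : Ω → Fin n → Bool) :
    ∑ ω, ∑ ω', ν ω * ν ω' * ((diffSet ℓ (X ω) (X ω')).card : ℝ) ≤
      ((n - ℓ : ℕ) : ℝ) / 2 * (∑ ω, ν ω) ^ 2 := by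
  have hcoord : ∀ i : Fin n, ∑ ω, ∑ ω', ν ω * ν ω' * (if X ω i ≠ X ω' i then (1 : ℝ) else 0) ≤
      1 / 2 * (∑ ω, ν ω) ^ 2 := by
    intro i
    set σ : Ω → ℝ := fun ω => if X ω i then 1 else -1 with hσ
    have h1 : ∀ ω ω', ν ω * ν ω' * (if X ω i ≠ X ω' i then (1 : ℝ) else 0) =
        1 / 2 * (ν ω * ν ω') - 1 / 2 * ((ν ω * σ ω) * (ν ω' * σ ω')) := by
      intro ω ω'
      simp only [hσ]
      cases X ω i <;> cases X ω' i <;> simp <;> ring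
    simp only [h1, sum_sub_distrib, ← mul_sum, ← sum_mul]
    nlinarith [sq_nonneg (∑ ω, ν ω * σ ω)]
  have hcard : (univ.filter fun i : Fin n => ℓ ≤ i.1).card = n - ℓ := by
    have h := Fin.card_filter_val_lt (n := n) (m := ℓ)
    have h' := Finset.card_filter_add_card_filter_not (s := (univ : Finset (Fin n)))
      (fun i => i.1 < ℓ)
    simp only [not_lt, card_univ, Fintype.card_fin] at h'
    omega
  have hd : ∀ ω ω', ((diffSet ℓ (X ω) (X ω')).card : ℝ) =
      ∑ i ∈ univ.filter (fun i : Fin n => ℓ ≤ i.1), if X ω i ≠ X ω' i then (1 : ℝ) else 0 := by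
    intro ω ω'
    rw [diffSet, ← filter_filter, ← sum_filter, sum_const, nsmul_eq_mul, mul_one]
  calc _ = ∑ i ∈ univ.filter (fun i : Fin n => ℓ ≤ i.1), ∑ ω, ∑ ω',
        ν ω * ν ω' * (if X ω i ≠ X ω' i then (1 : ℝ) else 0) := by
        simp only [hd, mul_sum]
        rw [sum_comm]
        conv_rhs => rw [sum_comm]
        rw [sum_comm]
        refine sum_congr rfl fun ω _ => sum_comm
    _ ≤ ∑ i ∈ univ.filter (fun i : Fin n => ℓ ≤ i.1), 1 / 2 * (∑ ω, ν ω) ^ 2 :=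
        sum_le_sum fun i _ => hcoord i
    _ = _ := by
        rw [sum_const, hcard, nsmul_eq_mul]
        ring

/-- Lower bound for the mass of pairs carrying distinct labels and close words, given a set `V`
of labels none of which carries more than an `η` fraction of the mass. -/
lemma le_sum_close_pairs {Ω U : Type*} [Fintype Ω] [DecidableEq U] {n : ℕ} (ℓ m : ℕ)
    (hm : 0 < m) (w : Ω → ℝ) (hw : ∀ ω, 0 ≤ w ω) (lab : Ω → U) (X : Ω → Fin n → Bool)
    (V : Finset U) {η : ℝ}
    (hlight : ∀ u ∈ V, ∑ ω, (if lab ω = u then w ω else 0) ≤ η * ∑ ω, w ω) :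
    (1 - ((n - ℓ : ℕ) : ℝ) / (2 * m)) * (∑ ω, if lab ω ∈ V then w ω else 0) ^ 2 -
        η * (∑ ω, w ω) * (∑ ω, if lab ω ∈ V then w ω else 0) ≤
      ∑ ω, ∑ ω', if lab ω ≠ lab ω' ∧ (diffSet ℓ (X ω) (X ω')).card < m
        then w ω * w ω' else 0 := by
  set ν : Ω → ℝ := fun ω => if lab ω ∈ V then w ω else 0 with hν
  have hν0 : ∀ ω, 0 ≤ ν ω := fun ω => by
    simp only [hν]
    split_ifs
    exacts [hw ω, le_rfl]
  have hνw : ∀ ω, ν ω ≤ w ω := fun ω => by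
    simp only [hν]
    split_ifs
    exacts [le_rfl, hw ω]
  have hm' : (0 : ℝ) < m := by exact_mod_cast hm
  have hpt : ∀ ω ω', ν ω * ν ω' ≤
      (if lab ω ≠ lab ω' ∧ (diffSet ℓ (X ω) (X ω')).card < m then w ω * w ω' else 0) +
        ν ω * (if lab ω' = lab ω then w ω' else 0) +
        ν ω * ν ω' * ((diffSet ℓ (X ω) (X ω')).card : ℝ) * (1 / m) := by
    intro ω ω'
    have hn := mul_nonneg (hν0 ω) (hν0 ω')
    have h3 : 0 ≤ ν ω * ν ω' * ((diffSet ℓ (X ω) (X ω')).card : ℝ) * (1 / m) := by positivity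
    by_cases hu : lab ω = lab ω'
    · simp only [hu, ne_eq, not_true_eq_false, false_and, if_false, if_true, zero_add]
      have := mul_le_mul_of_nonneg_left (hνw ω') (hν0 ω)
      linarith
    · have hu' : ¬ lab ω' = lab ω := fun h => hu h.symm
      by_cases hd : (diffSet ℓ (X ω) (X ω')).card < m
      · simp only [hu, hu', hd, ne_eq, not_false_eq_true, and_self, if_true, if_false, mul_zero,
          add_zero]
        have := mul_le_mul (hνw ω) (hνw ω') (hν0 ω') (hw ω)
        linarith
      · simp only [hu', hd, and_false, if_false, mul_zero, add_zero, zero_add]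
        have hd' : (m : ℝ) ≤ (diffSet ℓ (X ω) (X ω')).card := by exact_mod_cast not_lt.mp hd
        rw [mul_one_div, le_div_iff₀ hm']
        exact mul_le_mul_of_nonneg_left hd' hn
  have hsum := sum_le_sum fun ω (_ : ω ∈ univ) => sum_le_sum fun ω' (_ : ω' ∈ univ) => hpt ω ω'
  have hdiag : ∑ ω, ∑ ω', ν ω * (if lab ω' = lab ω then w ω' else 0) ≤
      η * (∑ ω, w ω) * ∑ ω, ν ω := by
    rw [mul_sum]
    refine sum_le_sum fun ω _ => ?_
    rw [← mul_sum, mul_comm]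
    by_cases hV : lab ω ∈ V
    · exact mul_le_mul_of_nonneg_right (hlight _ hV) (hν0 ω)
    · simp [hν, hV]
  have hplot := mul_le_mul_of_nonneg_right (sum_mul_card_diffSet_le ℓ ν X)
    (by positivity : (0 : ℝ) ≤ 1 / m)
  simp only [sum_add_distrib, ← sum_mul] at hsum
  rw [← sum_mul_sum, ← pow_two] at hsum
  have heq : ((n - ℓ : ℕ) : ℝ) / 2 * (∑ ω, ν ω) ^ 2 * (1 / m) =
      ((n - ℓ : ℕ) : ℝ) / (2 * m) * (∑ ω, ν ω) ^ 2 := by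
    field_simp
  rw [heq] at hplot
  linarith

/-- Some target word forces a loss bounded below in terms of the mass of `V`, provided that for
close words with distinct labels the losses of the two mutual targets add up to at least `1`. -/
lemma exists_target {Ω U : Type*} [Fintype Ω] [DecidableEq U] {n : ℕ} (ℓ m : ℕ) (hm : 0 < m)
    (w : Ω → ℝ) (hw : ∀ ω, 0 ≤ w ω) (lab : Ω → U) (X : Ω → Fin n → Bool)
    (e : Ω → (Fin n → Bool) → ℝ) (he : ∀ ω x, 0 ≤ e ω x) (V : Finset U) {η θ κ : ℝ}
    (hlight : ∀ u ∈ V, ∑ ω, (if lab ω = u then w ω else 0) ≤ η * ∑ ω, w ω)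
    (hpair : ∀ ω ω', w ω ≠ 0 → w ω' ≠ 0 → lab ω ≠ lab ω' →
      (diffSet ℓ (X ω) (X ω')).card < m → 1 ≤ e ω (X ω') + e ω' (X ω))
    (hθ0 : 0 ≤ θ) (hθ : θ ≤ 1 - ((n - ℓ : ℕ) : ℝ) / (2 * m)) :
    ∃ x, 1 / 2 * (θ * (2 * κ * (∑ ω, if lab ω ∈ V then w ω else 0) - κ ^ 2 * ∑ ω, w ω) -
      η * ∑ ω, if lab ω ∈ V then w ω else 0) ≤ ∑ ω, w ω * e ω x := by
  obtain ⟨x, hx⟩ := Finite.exists_max fun x => ∑ ω, w ω * e ω x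
  refine ⟨x, ?_⟩
  have hclose := le_sum_close_pairs ℓ m hm w hw lab X V hlight
  set N := ∑ ω, if lab ω ∈ V then w ω else 0 with hN
  set W := ∑ ω, w ω with hW
  set T := ∑ ω, w ω * e ω x with hT
  have hpairs : ∑ ω, ∑ ω', (if lab ω ≠ lab ω' ∧ (diffSet ℓ (X ω) (X ω')).card < m
      then w ω * w ω' else 0) ≤
      ∑ ω, ∑ ω', (w ω' * (w ω * e ω (X ω')) + w ω * (w ω' * e ω' (X ω))) := by
    refine sum_le_sum fun ω _ => sum_le_sum fun ω' _ => ?_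
    have hn := mul_nonneg (hw ω) (hw ω')
    have hrw : w ω' * (w ω * e ω (X ω')) + w ω * (w ω' * e ω' (X ω)) =
        w ω * w ω' * (e ω (X ω') + e ω' (X ω)) := by ring
    rw [hrw]
    split_ifs with h
    · by_cases h1 : w ω = 0
      · simp [h1]
      by_cases h2 : w ω' = 0
      · simp [h2]
      exact le_mul_of_one_le_right hn (hpair ω ω' h1 h2 h.1 h.2)
    · exact mul_nonneg hn (add_nonneg (he _ _) (he _ _))
  have havg : ∑ ω', ∑ ω, w ω' * (w ω * e ω (X ω')) ≤ W * T := by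
    rw [hW, sum_mul]
    refine sum_le_sum fun ω' _ => ?_
    rw [← mul_sum]
    exact mul_le_mul_of_nonneg_left (hx (X ω')) (hw ω')
  have hcomm : ∑ ω, ∑ ω', w ω' * (w ω * e ω (X ω')) = ∑ ω', ∑ ω, w ω' * (w ω * e ω (X ω')) :=
    sum_comm
  simp only [sum_add_distrib] at hpairs
  rw [hcomm] at hpairs
  have hmain : θ * N ^ 2 - η * W * N ≤ 2 * (W * T) := by
    have := mul_le_mul_of_nonneg_right hθ (sq_nonneg N)
    linarith
  have hW0 : 0 ≤ W := sum_nonneg fun ω _ => hw ω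
  have hT0 : 0 ≤ T := sum_nonneg fun ω _ => mul_nonneg (hw ω) (he ω x)
  rcases hW0.eq_or_lt with h0 | h0
  · have hz : ∀ ω, w ω = 0 := fun ω =>
      (sum_eq_zero_iff_of_nonneg fun ω _ => hw ω).mp h0.symm ω (mem_univ ω)
    have hN0 : N = 0 := by simp [hN, hz]
    rw [hN0, ← h0]
    simpa using hT0
  · refine le_of_mul_le_mul_left ?_ h0
    nlinarith [mul_nonneg hθ0 (sq_nonneg (N - κ * W))]

/-- At most `2 ^ s` labels carry more than a `2⁻ˢ` fraction of the total mass. -/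
lemma card_heavy_le {Ω U : Type*} [Fintype Ω] [Fintype U] [DecidableEq U] (w : Ω → ℝ)
    (hw : ∀ ω, 0 ≤ w ω) (lab : Ω → U) (s : ℕ) :
    (univ.filter fun u =>
      ((2 : ℝ) ^ s)⁻¹ * ∑ ω, w ω < ∑ ω, if lab ω = u then w ω else 0).card ≤ 2 ^ s := by
  set B := univ.filter fun u =>
      ((2 : ℝ) ^ s)⁻¹ * ∑ ω, w ω < ∑ ω, if lab ω = u then w ω else 0 with hB
  have hnn : ∀ u, 0 ≤ ∑ ω, if lab ω = u then w ω else 0 := fun u => sum_nonneg fun ω _ => by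
    split_ifs
    exacts [hw ω, le_rfl]
  have htot : ∑ u, ∑ ω, (if lab ω = u then w ω else 0) = ∑ ω, w ω := by
    rw [sum_comm]
    simp
  have hle : ∑ u ∈ B, ∑ ω, (if lab ω = u then w ω else 0) ≤ ∑ ω, w ω :=
    (sum_le_sum_of_subset_of_nonneg (subset_univ _) fun u _ _ => hnn u).trans_eq htot
  have hge : (B.card : ℝ) * (((2 : ℝ) ^ s)⁻¹ * ∑ ω, w ω) ≤
      ∑ u ∈ B, ∑ ω, if lab ω = u then w ω else 0 := by
    rw [← nsmul_eq_mul, ← sum_const]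
    exact sum_le_sum fun u hu => (mem_filter.mp hu).2.le
  rcases (sum_nonneg fun ω _ => hw ω : 0 ≤ ∑ ω, w ω).eq_or_lt with h0 | h0
  · have : B = ∅ := by
      refine eq_empty_of_forall_notMem fun u hu => ?_
      have h1 := (mem_filter.mp hu).2
      have h2 := single_le_sum (f := fun u => ∑ ω, if lab ω = u then w ω else 0)
        (fun u _ => hnn u) (mem_univ u)
      simp only [htot, ← h0, mul_zero] at h1 h2
      linarith
    simp [this]
  · have hpow : (0 : ℝ) < 2 ^ s := by positivity
    have h1 : (B.card : ℝ) * ((2 : ℝ) ^ s)⁻¹ ≤ 1 := by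
      refine le_of_mul_le_mul_right ?_ h0
      linarith
    rw [← div_eq_mul_inv, div_le_one hpow] at h1
    exact_mod_cast h1

lemma ProbCode.dec_le_one {n : ℕ} {R : ℝ} (C : ProbCode n R) (y : Fin n → Bool) (u : C.U) :
    C.dec y u ≤ 1 := by
  rw [← C.dec_sum y]
  exact single_le_sum (fun u _ => C.dec_nonneg y u) (mem_univ u)

lemma ProbCode.dec_add_le_one {n : ℕ} {R : ℝ} (C : ProbCode n R) (y : Fin n → Bool)
    {u u' : C.U} (h : u ≠ u') : C.dec y u + C.dec y u' ≤ 1 := by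
  classical
  rw [← C.dec_sum y, ← sum_pair h]
  exact sum_le_sum_of_subset_of_nonneg (subset_univ _) fun u _ _ => C.dec_nonneg y u

/-- Lower bound on the error forced by the best `pushAdversary` with waiting time `ℓ`. -/
lemma ProbCode.exists_le_errProb {n : ℕ} {R p : ℝ} (C : ProbCode n R) (hn : 0 < n) (ℓ t s : ℕ)
    (ht : (t : ℝ) ≤ p * n) {θ κ : ℝ} (hκ : 0 ≤ κ) (hθ0 : 0 ≤ θ)
    (hθ : θ ≤ 1 - ((n - ℓ : ℕ) : ℝ) / (2 * (2 * t + 1 : ℕ)))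
    (hR : κ * n + 1 + ℓ + s ≤ R * n) :
    ∃ A : CausalAdversary n p, 1 / 2 * (θ * κ ^ 2 - ((2 : ℝ) ^ s)⁻¹) ≤ C.errProb A := by
  classical
  set η : ℝ := ((2 : ℝ) ^ s)⁻¹
  let P : C.U × (Fin n → Bool) → ℝ := fun ω => C.pU ω.1 * C.encDist ω.1 ω.2
  have hP : ∀ ω, 0 ≤ P ω := fun ω => mul_nonneg (C.pU_nonneg _) (C.encDist_nonneg _ _)
  let w : (Fin ℓ → Bool) → C.U × (Fin n → Bool) → ℝ :=
    fun z ω => if headWord ℓ ω.2 = z then P ω else 0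
  have hw : ∀ z ω, 0 ≤ w z ω := fun z ω => by
    simp only [w]
    split_ifs
    exacts [hP ω, le_rfl]
  let e : C.U × (Fin n → Bool) → (Fin n → Bool) → ℝ :=
    fun ω x => ∑ b, 1 / 2 * (1 - C.dec (pushWord ℓ t ω.2 x b) ω.1)
  have he : ∀ ω x, 0 ≤ e ω x := fun ω x => sum_nonneg fun b _ =>
    mul_nonneg (by norm_num) (sub_nonneg.mpr (C.dec_le_one _ _))
  let A : Finset C.U := univ.biUnion fun z => univ.filter fun u =>
    η * ∑ ω, w z ω < ∑ ω, if ω.1 = u then w z ω else 0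
  have hAcard : A.card ≤ 2 ^ (ℓ + s) := by
    refine (card_biUnion_le_card_mul _ _ (2 ^ s) fun z _ =>
      card_heavy_le (w z) (hw z) Prod.fst s).trans_eq ?_
    simp [pow_add]
  have hlight : ∀ z, ∀ u ∈ Aᶜ, ∑ ω, (if ω.1 = u then w z ω else 0) ≤ η * ∑ ω, w z ω := by
    intro z u hu
    by_contra h
    exact mem_compl.mp hu (mem_biUnion.mpr ⟨z, mem_univ z, by simpa using h⟩)
  have hpair : ∀ z ω ω', w z ω ≠ 0 → w z ω' ≠ 0 → ω.1 ≠ ω'.1 →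
      (diffSet ℓ ω.2 ω'.2).card < 2 * t + 1 → 1 ≤ e ω ω'.2 + e ω' ω.2 := by
    intro z ω ω' h h' hne hd
    have hz : headWord ℓ ω.2 = z := by
      by_contra hc
      simp [w, hc] at h
    have hz' : headWord ℓ ω'.2 = z := by
      by_contra hc
      simp [w, hc] at h'
    have hsw := fun b => pushWord_swap (t := t) b (hz.trans hz'.symm) (by omega)
    have h1 := hsw true
    have h2 := hsw false
    simp only [Bool.not_true, Bool.not_false] at h1 h2
    simp only [e, Fintype.sum_bool, h1, h2]
    linarith [C.dec_add_le_one (pushWord ℓ t ω'.2 ω.2 true) hne,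
      C.dec_add_le_one (pushWord ℓ t ω'.2 ω.2 false) hne]
  choose f hf using fun z => exists_target (κ := κ) ℓ (2 * t + 1) (by omega) (w z) (hw z) Prod.fst
    Prod.snd e he Aᶜ (hlight z) (hpair z) hθ0 hθ
  refine ⟨pushAdversary n p ℓ t ht f, ?_⟩
  have herr : C.errProb (pushAdversary n p ℓ t ht f) = ∑ z, ∑ ω, w z ω * e ω (f z) := by
    rw [sum_comm]
    simp only [w, ite_mul, zero_mul, sum_ite_eq, mem_univ, if_true]
    rw [Fintype.sum_prod_type]
    simp only [ProbCode.errProb]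
    refine sum_congr rfl fun u _ => sum_congr rfl fun x _ => ?_
    simp only [e, P, mul_sum]
    refine sum_congr rfl fun b _ => ?_
    have hrec := congrArg (fun y => C.pU u * C.encDist u x * (1 / 2) * (1 - C.dec y u))
      (received_pushAdversary ht f x b)
    exact hrec.trans (mul_assoc _ _ _)
  have hWsum : ∑ z, ∑ ω, w z ω = 1 := by
    rw [sum_comm]
    simp only [w, sum_ite_eq, mem_univ, if_true]
    rw [Fintype.sum_prod_type]
    simp only [P, ← mul_sum, C.encDist_sum, mul_one, C.pU_sum]
  have hNsum : ∑ z, ∑ ω, (if ω.1 ∈ Aᶜ then w z ω else 0) = ∑ u ∈ Aᶜ, C.pU u := by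
    have hmass : ∀ ω : C.U × (Fin n → Bool),
        ∑ z, (if ω.1 ∈ Aᶜ then w z ω else 0) = if ω.1 ∈ Aᶜ then P ω else 0 := fun ω => by
      split_ifs <;> simp [w]
    rw [sum_comm, sum_congr rfl fun ω _ => hmass ω, Fintype.sum_prod_type]
    simp only [P, sum_ite_irrel, sum_const_zero, ← mul_sum, C.encDist_sum, mul_one]
    rw [← sum_filter, filter_univ_mem]
  have hent := entropy2_le_of_card_le C.pU C.pU_nonneg C.pU_sum C.card_le A hAcard
  rw [C.pU_entropy] at hent
  have hsplit := Finset.sum_add_sum_compl A C.pU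
  rw [C.pU_sum] at hsplit
  have hA0 : 0 ≤ ∑ u ∈ A, C.pU u := sum_nonneg fun u _ => C.pU_nonneg u
  have hV0 : 0 ≤ ∑ u ∈ Aᶜ, C.pU u := sum_nonneg fun u _ => C.pU_nonneg u
  set v := ∑ u ∈ Aᶜ, C.pU u
  have hκv : κ ≤ v := by
    have hn' : (0 : ℝ) < n := by exact_mod_cast hn
    have hle : (∑ u ∈ A, C.pU u) * ((ℓ + s : ℕ) : ℝ) ≤ ℓ + s := by
      push_cast
      exact mul_le_of_le_one_left (by positivity) (by linarith)
    refine le_of_mul_le_mul_right ?_ hn'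
    linarith
  have hη0 : 0 ≤ η := by positivity
  have hfinal := sum_le_sum fun z (_ : z ∈ univ) => hf z
  rw [← herr, ← mul_sum, sum_sub_distrib, ← mul_sum, ← mul_sum, sum_sub_distrib, ← mul_sum,
    ← mul_sum, hWsum, hNsum] at hfinal
  refine le_trans ?_ hfinal
  have h1 : θ * κ ^ 2 ≤ θ * (2 * κ * v - κ ^ 2 * 1) :=
    mul_le_mul_of_nonneg_left (by nlinarith) hθ0
  have h2 : η * v ≤ η := mul_le_of_le_one_right hη0 (by linarith)
  linarith

/-- Quantitative form of Theorem 2: for every `p ∈ (0, 1/2]` and `ε > 0` there are a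
constant `c > 0`, an exponent `k`, and `N` such that for every `n ≥ N`, every
probabilistic `(n, Rn)`-code with rate `R = max(1 − 4p, 0) + ε` admits a causal adversary
with power `p` forcing probability of error at least `c · n^{-k}`. -/
theorem prob_converse_quantitative (p ε : ℝ) (hp0 : 0 < p) (hp1 : p ≤ 1 / 2)
    (hε : 0 < ε) :
    ∃ c > (0 : ℝ), ∃ k : ℕ, ∃ N : ℕ, ∀ n ≥ N,
      ∀ C : ProbCode n (max (1 - 4 * p) 0 + ε),
        ∃ A : CausalAdversary n p, c / (n : ℝ) ^ k ≤ C.errProb A := by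
  set M := max (1 - 4 * p) 0
  have hM1 : 1 - 4 * p ≤ M := le_max_left _ _
  have hM0 : 0 ≤ M := le_max_right _ _
  have hθ0 : 0 < ε / (8 + ε) := by positivity
  have hκ0 : 0 < ε / 4 := by positivity
  set θ := ε / (8 + ε) with hθ
  set κ := ε / 4 with hκ
  obtain ⟨s, hs⟩ := exists_pow_lt_of_lt_one (show 0 < θ * κ ^ 2 / 2 by positivity)
    (show (2 : ℝ)⁻¹ < 1 by norm_num)
  obtain ⟨N, hN⟩ := exists_nat_ge (max (8 / ε) (max (4 * (s + 2) / ε) (1 / (2 * p))))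
  refine ⟨θ * κ ^ 2 / 4, by positivity, 0, N + 1, fun n hn C => ?_⟩
  have hn0 : 0 < n := by omega
  have hnR : (0 : ℝ) < n := by exact_mod_cast hn0
  have hNn : (N : ℝ) ≤ n := by exact_mod_cast (by omega : N ≤ n)
  have hmax := hN.trans hNn
  simp only [max_le_iff] at hmax
  obtain ⟨hn1, hn2, hn3⟩ := hmax
  rw [div_le_iff₀ hε] at hn1 hn2
  rw [div_le_iff₀ (by positivity)] at hn3
  have hℓ0 : 0 ≤ (M + ε / 2) * n := by positivity
  have ht0 : 0 ≤ p * n := by positivity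
  have hℓ1 := Nat.le_ceil ((M + ε / 2) * n)
  have hℓ2 := Nat.ceil_lt_add_one hℓ0
  have ht1 := Nat.floor_le ht0
  have ht2 := Nat.lt_floor_add_one (p * n)
  set ℓ := ⌈(M + ε / 2) * (n : ℝ)⌉₊
  set t := ⌊p * (n : ℝ)⌋₊
  have hθ1 : θ * (8 + ε) = ε := by rw [hθ]; field_simp
  have hθle : θ ≤ 1 := by rw [hθ, div_le_one (by positivity)]; linarith
  have hθL : θ ≤ 1 - ((n - ℓ : ℕ) : ℝ) / (2 * (2 * t + 1 : ℕ)) := by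
    rw [le_sub_comm, div_le_iff₀ (by positivity)]
    push_cast
    rcases le_total n ℓ with h | h
    · rw [Nat.sub_eq_zero_of_le h, Nat.cast_zero]
      exact mul_nonneg (by linarith) (by positivity)
    · rw [Nat.cast_sub h]
      have hL : (n : ℝ) - ℓ ≤ (4 * p - ε / 2) * n := by nlinarith
      have hm : (1 - θ) * (4 * (p * n) - 2) ≤ (1 - θ) * (2 * (2 * t + 1)) :=
        mul_le_mul_of_nonneg_left (by linarith) (by linarith)
      have h4 : θ * (4 * (p * n)) ≤ ε / 4 * n := by
        have h5 : θ * (4 * p) ≤ ε / 4 := by nlinarith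
        nlinarith
      nlinarith
  have hR : κ * n + 1 + ℓ + s ≤ (M + ε) * n := by
    rw [hκ]
    linarith
  obtain ⟨A, hA⟩ := C.exists_le_errProb hn0 ℓ t s ht1 hκ0.le hθ0.le hθL hR
  refine ⟨A, le_trans ?_ hA⟩
  rw [inv_pow] at hs
  rw [pow_zero, div_one]
  linarith
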